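/- lim_{N→∞} Σ_{n=−N+1}^{N−1} Σ_{m∈ℤ} (−1)^{m+n} / ((8m)² + (4n+1)²) = (π/(8√2)) · log( (2^{1/8} + 1) / (2^{1/8} − 1) ), where 2^{1/8} denotes the positive real eighth root of 2. -/

import Mathlib

open Filter

/-!
Summing over `m` by partial fractions turns the row `n` into `(-1)ⁿ π / (c k sinh (π k / c))` with
`k = |4n + 1|` and `c = 8`. As `n` varies, `k` runs once through the odd numbers, and
`(-1)ⁿ = √2 cos (k π / 4)`. Expanding `1 / sinh` geometrically and exchanging the sums gives a
series of logarithms of the quadratics `1 ± √2 x + x²` at `x = q ^ (2j + 1)`, `q = exp (-π / c)`.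
By the Jacobi triple product its value is the logarithm of the ratio of the theta functions
`∑ q ^ n² cos (2π a n)` at `a = 1 / 8` and `a = 3 / 8`, hence, after Poisson summation, of
`E = ∑ exp (-π c (n + 1 / 8)²)` and `O = ∑ exp (-π c (n + 3 / 8)²)`.

At `c = 8`, duplication formulas express `(E + O)²` and `(E - O)²` as a common factor times the
theta constants `θ₃` and `θ₄` at `τ = i`. There `θ₂ = θ₄`, so `θ₃⁴ = θ₂⁴ + θ₄⁴` reads `θ₃⁴ = 2 θ₄⁴`,
and `E + O = 2 ^ (1 / 8) (E - O)`.
-/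

section Parity

open Function

variable {M : Type*} [AddCommMonoid M] [TopologicalSpace M] [ContinuousAdd M] {a b : M}

lemma hasSum_of_injective_of_isCompl_range {α β γ : Type*} {i : α → γ} {j : β → γ}
    (hi : Injective i) (hj : Injective j) (hij : IsCompl (Set.range i) (Set.range j)) {f : γ → M}
    (ha : HasSum (f ∘ i) a) (hb : HasSum (f ∘ j) b) : HasSum f (a + b) :=
  (hi.hasSum_range_iff.mpr ha).add_isCompl hij (hj.hasSum_range_iff.mpr hb)

lemma hasSum_int_of_even_of_odd {f : ℤ → M} (ha : HasSum (fun n => f (2 * n)) a)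
    (hb : HasSum (fun n => f (2 * n + 1)) b) : HasSum f (a + b) := by
  refine hasSum_of_injective_of_isCompl_range (i := (2 * ·)) (j := (2 * · + 1))
    (fun m n h => by grind) (fun m n h => by grind) ⟨?_, ?_⟩ ha hb
  · rw [Set.disjoint_left]
    rintro _ ⟨m, rfl⟩ ⟨n, hn⟩
    grind
  · rw [codisjoint_iff_le_sup]
    rintro n -
    obtain ⟨k, hk | hk⟩ := n.even_or_odd'
    exacts [.inl ⟨k, hk.symm⟩, .inr ⟨k, hk.symm⟩]

lemma hasSum_int_prod_of_even_of_odd {f : ℤ × ℤ → M}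
    (ha : HasSum (fun p : ℤ × ℤ => f (p.1 + p.2, p.1 - p.2)) a)
    (hb : HasSum (fun p : ℤ × ℤ => f (p.1 + p.2 + 1, p.1 - p.2)) b) : HasSum f (a + b) := by
  refine hasSum_of_injective_of_isCompl_range (i := fun p : ℤ × ℤ => (p.1 + p.2, p.1 - p.2))
    (j := fun p : ℤ × ℤ => (p.1 + p.2 + 1, p.1 - p.2))
    (fun p p' h => by grind) (fun p p' h => by grind) ⟨?_, ?_⟩ ha hb
  · rw [Set.disjoint_left]
    rintro _ ⟨p, rfl⟩ ⟨p', hp'⟩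
    grind
  · rw [codisjoint_iff_le_sup]
    rintro ⟨m, n⟩ -
    obtain ⟨k, hk | hk⟩ := (m + n).even_or_odd'
    exacts [.inl ⟨(k, m - k), by grind⟩, .inr ⟨(k, m - k - 1), by grind⟩]

end Parity

section PartialFractions

open Real Complex

lemma hasSum_nat_one_div_sq_add_sq {b : ℝ} (hb : b ≠ 0) :
    HasSum (fun n : ℕ => 1 / (((n : ℝ) + 1) ^ 2 + b ^ 2))
      ((π / b * (Real.cosh (π * b) / Real.sinh (π * b)) - 1 / b ^ 2) / 2) := by
  have hz : (I * b : ℂ) ∈ integerComplement := by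
    rintro ⟨n, hn⟩
    exact hb (by simpa using (congrArg Complex.im hn).symm)
  have hcot : HasSum (cotTerm (I * b)) (π * cot (π * (I * b)) - 1 / (I * b)) :=
    (summable_cotTerm hz).hasSum_iff_tendsto_nat.mpr (tendsto_logDeriv_euler_cot_sub hz)
  rw [← Complex.hasSum_ofReal]
  have hbc : (b : ℂ) ≠ 0 := mod_cast hb
  have hsinh : Complex.sinh (π * b) ≠ 0 := by
    have : Real.sinh (π * b) ≠ 0 := by simpa [Real.sinh_eq_zero, pi_ne_zero] using hb
    exact_mod_cast this
  have value_eq : (((π / b * (Real.cosh (π * b) / Real.sinh (π * b)) - 1 / b ^ 2) / 2 : ℝ) : ℂ) =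
      I / (2 * b) * (π * cot (π * (I * b)) - 1 / (I * b)) := by
    rw [Complex.cot, show (π * (I * b) : ℂ) = π * b * I by ring, Complex.cos_mul_I,
      Complex.sin_mul_I]
    push_cast
    field_simp
  rw [value_eq]
  refine (hcot.mul_left _).congr_fun fun n => ?_
  have hn : ((n : ℂ) + 1) ^ 2 + b ^ 2 ≠ 0 := by
    have : ((n : ℝ) + 1) ^ 2 + b ^ 2 ≠ 0 := by positivity
    exact_mod_cast this
  have hfac : (I * b + (n + 1)) * (I * b - (n + 1) : ℂ) = -((n + 1) ^ 2 + b ^ 2) := by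
    linear_combination (b : ℂ) ^ 2 * I_sq
  rw [cotTerm_identity hz, hfac]
  push_cast
  field_simp
  simp

lemma hasSum_int_one_div_sq_add_sq {b : ℝ} (hb : b ≠ 0) :
    HasSum (fun m : ℤ => 1 / ((m : ℝ) ^ 2 + b ^ 2))
      (π / b * (Real.cosh (π * b) / Real.sinh (π * b))) := by
  have h := hasSum_nat_one_div_sq_add_sq hb
  convert HasSum.of_add_one_of_neg_add_one (f := fun m : ℤ => 1 / ((m : ℝ) ^ 2 + b ^ 2))
    (h.congr_fun fun n => by push_cast; rfl)
    (h.congr_fun fun n => by push_cast; rw [neg_sq]) using 1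
  push_cast
  ring

lemma hasSum_int_neg_one_zpow_div_sq_add_sq {b : ℝ} (hb : b ≠ 0) :
    HasSum (fun m : ℤ => (-1 : ℝ) ^ m / ((m : ℝ) ^ 2 + b ^ 2)) (π / (b * Real.sinh (π * b))) := by
  set f : ℤ → ℝ := fun m => 1 / ((m : ℝ) ^ 2 + b ^ 2)
  have hf : HasSum f (π / b * (Real.cosh (π * b) / Real.sinh (π * b))) :=
    hasSum_int_one_div_sq_add_sq hb
  have hb2 : b / 2 ≠ 0 := div_ne_zero hb two_ne_zero
  have even_part : HasSum (fun m => f (2 * m))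
      (1 / 4 * (π / (b / 2) * (Real.cosh (π * (b / 2)) / Real.sinh (π * (b / 2))))) := by
    refine ((hasSum_int_one_div_sq_add_sq hb2).mul_left (1 / 4)).congr_fun fun m => ?_
    simp only [f]
    push_cast
    field_simp
    ring
  obtain ⟨o, odd_part⟩ : Summable fun m => f (2 * m + 1) :=
    hf.summable.comp_injective (i := fun m : ℤ => 2 * m + 1) fun m n h => by grind
  have total := hf.unique (hasSum_int_of_even_of_odd even_part odd_part)
  have h := hasSum_int_of_even_of_odd (f := fun m : ℤ => (-1 : ℝ) ^ m / ((m : ℝ) ^ 2 + b ^ 2))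
    (even_part.congr_fun fun m => by simp [f, (even_two_mul m).neg_one_zpow])
    (odd_part.neg.congr_fun fun m => by simp [f, (odd_two_mul_add_one m).neg_one_zpow, neg_div])
  convert h using 1
  have hsinh : Real.sinh (π * (b / 2)) ≠ 0 := by simp [pi_ne_zero, hb]
  have hcosh := (Real.cosh_pos (π * (b / 2))).ne'
  rw [eq_sub_of_add_eq' total.symm, show π * b = 2 * (π * (b / 2)) by ring, Real.sinh_two_mul,
    Real.cosh_two_mul]
  field_simp [hsinh, hcosh]
  linear_combination -4 * Real.cosh_sq (π * b / 2)

lemma tsum_int_neg_one_zpow_div_sq_add_sq {a c : ℝ} (ha : a ≠ 0) (hc : 0 < c) :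
    ∑' m : ℤ, (-1 : ℝ) ^ m / ((c * m) ^ 2 + a ^ 2) = π / (c * |a| * Real.sinh (π * |a| / c)) := by
  have hb : |a| / c ≠ 0 := by positivity
  have h := (hasSum_int_neg_one_zpow_div_sq_add_sq hb).mul_left (1 / c ^ 2)
  have term_eq (m : ℤ) : (-1 : ℝ) ^ m / ((c * m) ^ 2 + a ^ 2) =
      1 / c ^ 2 * ((-1) ^ m / (m ^ 2 + (|a| / c) ^ 2)) := by
    rw [div_pow, sq_abs]
    field_simp
  rw [(h.congr_fun term_eq).tsum_eq, mul_div_assoc]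
  field_simp

end PartialFractions

section OddSeries

open Real Complex

lemma hasSum_log_one_add_div_one_sub {w : ℂ} (hw : ‖w‖ < 1) :
    HasSum (fun j : ℕ => w ^ (2 * j + 1) / (2 * j + 1)) (1 / 2 * log ((1 + w) / (1 - w))) := by
  have h := (Complex.hasSum_arctan (z := -I * w) (by simpa using hw)).mul_left I
  have value_eq : I * Complex.arctan (-I * w) = 1 / 2 * log ((1 + w) / (1 - w)) := by
    rw [Complex.arctan, show -I * w * I = w by linear_combination -w * I_sq]
    linear_combination (-1 / 2 * log ((1 + w) / (1 - w))) * I_sq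
  rw [value_eq] at h
  refine h.congr_fun fun j => ?_
  rw [mul_pow, pow_succ (-I), pow_mul, neg_sq, I_sq, mul_div_assoc']
  push_cast
  congr 1
  have : ((-1 : ℂ) ^ j) * (-1) ^ j = 1 := by rw [← mul_pow]; simp
  linear_combination (-w ^ (2 * j + 1)) * this + ((-1 : ℂ) ^ j) * (-1) ^ j * w ^ (2 * j + 1) * I_sq

lemma hasSum_pow_mul_cos_div_odd (θ : ℝ) {x : ℝ} (hx : |x| < 1) :
    HasSum (fun j : ℕ => x ^ (2 * j + 1) * Real.cos ((2 * j + 1) * θ) / (2 * j + 1))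
      (1 / 4 * Real.log ((1 + 2 * Real.cos θ * x + x ^ 2) / (1 - 2 * Real.cos θ * x + x ^ 2))) := by
  set w : ℂ := x * cexp (θ * I)
  have hw : ‖w‖ < 1 := by simpa [w, norm_exp_ofReal_mul_I] using hx
  have norm_sq_one_add (s : ℝ) : ‖1 + s * w‖ ^ 2 = 1 + 2 * s * Real.cos θ * x + s ^ 2 * x ^ 2 := by
    rw [← normSq_eq_norm_sq, normSq_apply]
    simp only [w, Complex.add_re, Complex.add_im, one_re, one_im, re_ofReal_mul, im_ofReal_mul,
      exp_ofReal_mul_I_re, exp_ofReal_mul_I_im]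
    linear_combination (s ^ 2 * x ^ 2) * Real.sin_sq_add_cos_sq θ
  have h := Complex.hasSum_re (hasSum_log_one_add_div_one_sub hw)
  have value_eq : (1 / 2 * log ((1 + w) / (1 - w))).re = 1 / 4 * Real.log
      ((1 + 2 * Real.cos θ * x + x ^ 2) / (1 - 2 * Real.cos θ * x + x ^ 2)) := by
    have hp : 1 + 2 * Real.cos θ * x + x ^ 2 = ‖1 + w‖ ^ 2 := by
      simpa using (norm_sq_one_add 1).symm
    have hm : 1 - 2 * Real.cos θ * x + x ^ 2 = ‖1 - w‖ ^ 2 := by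
      simpa [← sub_eq_add_neg] using (norm_sq_one_add (-1)).symm
    rw [hp, hm, ← div_pow, Real.log_pow, ← norm_div, ← log_re,
      show (1 / 2 : ℂ) = (1 / 2 : ℝ) by push_cast; rfl, re_ofReal_mul]
    push_cast
    ring
  rw [value_eq] at h
  refine h.congr_fun fun j => ?_
  have hwj : w ^ (2 * j + 1) / (2 * j + 1) =
      (x ^ (2 * j + 1) / (2 * j + 1) : ℝ) * cexp (((2 * j + 1) * θ : ℝ) * I) := by
    rw [mul_pow, ← Complex.exp_nat_mul]
    push_cast
    ring_nf
  rw [hwj, re_ofReal_mul, exp_ofReal_mul_I_re]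
  ring

lemma natAbs_four_mul_add_one (n : ℤ) : (4 * n + 1).natAbs = 2 * Equiv.intEquivNat n + 1 := by
  cases n with
  | ofNat n =>
    change (4 * (n : ℤ) + 1).natAbs = 2 * (2 * n) + 1
    lia
  | negSucc n =>
    change (4 * Int.negSucc n + 1).natAbs = 2 * (2 * n + 1) + 1
    lia

lemma cos_natAbs_four_mul_add_one_mul_pi_div_four (n : ℤ) :
    Real.cos ((4 * n + 1).natAbs * (π / 4)) = (-1) ^ n * (√2 / 2) := by
  rw [← Real.cos_abs, abs_mul, Nat.abs_cast, Nat.cast_natAbs, Int.cast_abs, ← abs_mul,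
    Real.cos_abs, ← Real.cos_pi_div_four, ← Real.cos_add_int_mul_pi]
  congr 1
  push_cast
  ring

lemma hasSum_int_neg_one_zpow_mul_pow_natAbs_div {x : ℝ} (hx : |x| < 1) :
    HasSum (fun n : ℤ => (-1) ^ n * x ^ (4 * n + 1).natAbs / (4 * n + 1).natAbs)
      (1 / (2 * √2) * Real.log ((1 + √2 * x + x ^ 2) / (1 - √2 * x + x ^ 2))) := by
  have h := (Equiv.intEquivNat.hasSum_iff.mpr (hasSum_pow_mul_cos_div_odd (π / 4) hx)).mul_left √2
  have hsq : √2 ^ 2 = 2 := Real.sq_sqrt zero_le_two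
  have value_eq : √2 * (1 / 4 * Real.log ((1 + 2 * Real.cos (π / 4) * x + x ^ 2) /
      (1 - 2 * Real.cos (π / 4) * x + x ^ 2))) =
      1 / (2 * √2) * Real.log ((1 + √2 * x + x ^ 2) / (1 - √2 * x + x ^ 2)) := by
    rw [Real.cos_pi_div_four, mul_div_cancel₀ _ two_ne_zero]
    field_simp
    rw [hsq]
    ring
  rw [value_eq] at h
  refine h.congr_fun fun n => ?_
  have hcos := cos_natAbs_four_mul_add_one_mul_pi_div_four n
  rw [natAbs_four_mul_add_one] at hcos ⊢
  push_cast at hcos ⊢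
  simp only [Function.comp, hcos]
  linear_combination (-(1 / 2) * (-1) ^ n * x ^ (2 * Equiv.intEquivNat n + 1) /
    (2 * Equiv.intEquivNat n + 1)) * hsq

lemma hasSum_exp_neg_odd_mul {y : ℝ} (hy : 0 < y) :
    HasSum (fun j : ℕ => rexp (-(2 * j + 1) * y)) (1 / (2 * Real.sinh y)) := by
  have hr : rexp (-2 * y) < 1 := by simpa using hy
  have h := (hasSum_geometric_of_lt_one (exp_pos _).le hr).mul_left (rexp (-y))
  have value_eq : rexp (-y) * (1 - rexp (-2 * y))⁻¹ = 1 / (2 * Real.sinh y) := by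
    have one_sub_eq : 1 - rexp (-2 * y) = rexp (-y) * (2 * Real.sinh y) := by
      rw [Real.sinh_eq, mul_div_cancel₀ _ two_ne_zero, mul_sub, ← Real.exp_add, ← Real.exp_add]
      simp [neg_mul, two_mul]
    rw [one_sub_eq, mul_inv, mul_inv_cancel_left₀ (Real.exp_ne_zero _), one_div]
  rw [value_eq] at h
  refine h.congr_fun fun j => ?_
  rw [← Real.exp_nat_mul, ← Real.exp_add]
  ring_nf

end OddSeries

section FiniteTripleProduct

open Finset

variable {𝕜 : Type*} [Field 𝕜]

/-- The reciprocal `1 / ((1 - p)(1 - p²) ⋯ (1 - pᵐ))` of the finite `q`-Pochhammer symbol with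
base `p`, extended by zero to `m < 0`, which is the extension respecting its recurrence. -/
def invQPochhammer (p : 𝕜) : ℤ → 𝕜
  | .ofNat m => (∏ i ∈ range m, (1 - p ^ (i + 1)))⁻¹
  | .negSucc _ => 0

lemma invQPochhammer_natCast (p : 𝕜) (m : ℕ) :
    invQPochhammer p m = (∏ i ∈ range m, (1 - p ^ (i + 1)))⁻¹ :=
  rfl

lemma invQPochhammer_of_neg (p : 𝕜) {m : ℤ} (hm : m < 0) : invQPochhammer p m = 0 := by
  obtain ⟨k, rfl⟩ := Int.eq_negSucc_of_lt_zero hm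
  rfl

lemma invQPochhammer_natCast_ne_zero {p : 𝕜} (hp : ∀ i : ℕ, p ^ (i + 1) ≠ 1) (m : ℕ) :
    invQPochhammer p m ≠ 0 :=
  inv_ne_zero <| prod_ne_zero_iff.mpr fun i _ => sub_ne_zero.mpr (hp i).symm

lemma invQPochhammer_eq_mul_add_one {p : 𝕜} (hp : ∀ i : ℕ, p ^ (i + 1) ≠ 1) (m : ℤ) :
    invQPochhammer p m = (1 - p ^ (m + 1)) * invQPochhammer p (m + 1) := by
  rcases lt_trichotomy m (-1) with hm | rfl | hm
  · rw [invQPochhammer_of_neg p (by lia), invQPochhammer_of_neg p (by lia), mul_zero]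
  · simp [invQPochhammer_of_neg]
  · lift m to ℕ using by lia
    have hm : 1 - p ^ (m + 1) ≠ 0 := sub_ne_zero.mpr (hp m).symm
    rw [← Nat.cast_succ, zpow_natCast, invQPochhammer_natCast, invQPochhammer_natCast,
      prod_range_succ, mul_inv_rev, mul_inv_cancel_left₀ hm]

lemma invQPochhammer_sq_eq_mul_add_one {q : 𝕜} (hq : ∀ i : ℕ, (q ^ 2) ^ (i + 1) ≠ 1) (m : ℤ) :
    invQPochhammer (q ^ 2) m =
      (1 - q ^ (2 * (m + 1))) * invQPochhammer (q ^ 2) (m + 1) := by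
  rw [zpow_mul]
  exact_mod_cast invQPochhammer_eq_mul_add_one hq m

lemma invQPochhammer_sq_two_mul {q : 𝕜} (hq : ∀ i : ℕ, (q ^ 2) ^ (i + 1) ≠ 1) (hq0 : q ≠ 0)
    (N : ℕ) :
    invQPochhammer (q ^ 2) (2 * N) = (1 - (q ^ (2 * N + 1)) ^ 2) *
      (1 - (q ^ (2 * N + 1)) ^ 2 * q ^ 2) * invQPochhammer (q ^ 2) (2 * (N + 1)) := by
  have hodd : q ^ (2 * (2 * N + 1 : ℤ)) = (q ^ (2 * N + 1)) ^ 2 := by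
    rw [← pow_mul, mul_comm]
    norm_cast
  have heven : q ^ (2 * (2 * N + 1 + 1 : ℤ)) = (q ^ (2 * N + 1)) ^ 2 * q ^ 2 := by
    rw [mul_add_one, zpow_add₀ hq0, hodd]
    norm_cast
  have hw := invQPochhammer_sq_eq_mul_add_one hq
  rw [hw, hw (2 * N + 1), hodd, heven, mul_add_one, add_assoc, one_add_one_eq_two, mul_assoc]

/-- The coefficient of `zⁿ` in `∏_{j < N} (1 + z q ^ (2j + 1)) (1 + z⁻¹ q ^ (2j + 1))`, that is
`q ^ n²` times the Gaussian binomial coefficient `2N` choose `N + n` in base `q²`. Here `q²` should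
not be a root of unity, since the denominators are inverted in `𝕜`. -/
noncomputable def tripleProductCoeff (q : 𝕜) (N n : ℤ) : 𝕜 :=
  invQPochhammer (q ^ 2) (N - n) * invQPochhammer (q ^ 2) (N + n) /
    invQPochhammer (q ^ 2) (2 * N) * q ^ n ^ 2

lemma tripleProductCoeff_zero (q : 𝕜) (n : ℤ) :
    tripleProductCoeff q 0 n = if n = 0 then 1 else 0 := by
  rcases lt_trichotomy n 0 with hn | rfl | hn
  · simp [tripleProductCoeff, invQPochhammer_of_neg _ hn, hn.ne]
  · simp [tripleProductCoeff, invQPochhammer]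
  · simp [tripleProductCoeff, invQPochhammer_of_neg _ (neg_neg_of_pos hn), hn.ne']

lemma tripleProductCoeff_add_one {q : 𝕜} (hq : ∀ i : ℕ, (q ^ 2) ^ (i + 1) ≠ 1) (hq0 : q ≠ 0)
    (N : ℕ) (n : ℤ) :
    tripleProductCoeff q (N + 1) n =
      (1 + (q ^ (2 * N + 1)) ^ 2) * tripleProductCoeff q N n +
        q ^ (2 * N + 1) * (tripleProductCoeff q N (n - 1) + tripleProductCoeff q N (n + 1)) := by
  have h2N : invQPochhammer (q ^ 2) (2 * N) ≠ 0 :=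
    mod_cast invQPochhammer_natCast_ne_zero hq (2 * N)
  have h2N' : invQPochhammer (q ^ 2) (2 * (N + 1)) ≠ 0 :=
    mod_cast invQPochhammer_natCast_ne_zero hq (2 * (N + 1))
  have hw := invQPochhammer_sq_eq_mul_add_one hq
  have hw2N := invQPochhammer_sq_two_mul hq hq0 N
  simp only [tripleProductCoeff, ← zpow_natCast q (2 * N + 1)] at hw2N ⊢
  set w := invQPochhammer (q ^ 2)
  set x := q ^ ((2 * N + 1 : ℕ) : ℤ) with hx
  set a := q ^ (2 * (N - n)) with ha
  set b := q ^ (2 * (N + n)) with hb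
  have hwa : w (N - n) = (1 - a * q ^ 2) * w (N + 1 - n) := by
    rw [hw, mul_add_one, zpow_add₀ hq0, ← ha, add_sub_right_comm]; norm_cast
  have hwb : w (N + n) = (1 - b * q ^ 2) * w (N + 1 + n) := by
    rw [hw, mul_add_one, zpow_add₀ hq0, ← hb, add_right_comm]; norm_cast
  have hwa' : w (N - (n + 1)) = (1 - a) * w (N - n) := by rw [hw, ← sub_sub, sub_add_cancel]
  have hwb' : w (N + (n - 1)) = (1 - b) * w (N + n) := by rw [hw, ← add_sub_assoc, sub_add_cancel]
  have hxx : x ^ 2 = a * b * q ^ 2 := by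
    simp only [hx, ha, hb, ← zpow_natCast, ← zpow_mul, ← zpow_add₀ hq0]
    congr 1; push_cast; ring
  have hqa : x * q ^ (n - 1) ^ 2 = a * q ^ 2 * q ^ n ^ 2 := by
    simp only [hx, ha, ← zpow_natCast, ← zpow_add₀ hq0]
    congr 1; push_cast; ring
  have hqb : x * q ^ (n + 1) ^ 2 = b * q ^ 2 * q ^ n ^ 2 := by
    simp only [hx, hb, ← zpow_natCast, ← zpow_add₀ hq0]
    congr 1; push_cast; ring
  rw [show (N - (n - 1) : ℤ) = N + 1 - n by ring, show (N + (n + 1) : ℤ) = N + 1 + n by ring,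
    hwa', hwb', hwa, hwb]
  generalize w (N + 1 - n) = u, w (N + 1 + n) = v
  have pascal : (1 + x ^ 2) * ((1 - a * q ^ 2) * (1 - b * q ^ 2)) +
      a * q ^ 2 * ((1 - b) * (1 - b * q ^ 2)) + b * q ^ 2 * ((1 - a) * (1 - a * q ^ 2)) =
        (1 - x ^ 2) * (1 - x ^ 2 * q ^ 2) := by rw [hxx]; ring
  field_simp
  linear_combination u * v * (q ^ n ^ 2 * hw2N - w (2 * (N + 1)) * (q ^ n ^ 2 * pascal +
    (1 - b) * (1 - b * q ^ 2) * hqa + (1 - a) * (1 - a * q ^ 2) * hqb))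

variable [TopologicalSpace 𝕜] [IsTopologicalRing 𝕜]

lemma hasSum_tripleProductCoeff_mul_zpow {q z : 𝕜} (hq : ∀ i : ℕ, (q ^ 2) ^ (i + 1) ≠ 1)
    (hq0 : q ≠ 0) (hz : z ≠ 0) (N : ℕ) :
    HasSum (fun n : ℤ => tripleProductCoeff q N n * z ^ n)
      (∏ j ∈ range N, (1 + z * q ^ (2 * j + 1)) * (1 + z⁻¹ * q ^ (2 * j + 1))) := by
  induction N with
  | zero =>
    have h0 := hasSum_ite_eq (0 : ℤ) (1 : 𝕜)
    refine h0.congr_fun fun n => ?_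
    rcases eq_or_ne n 0 with rfl | hn <;> simp [tripleProductCoeff_zero, *]
  | succ N ih =>
    set x := q ^ (2 * N + 1)
    set P := ∏ j ∈ range N, (1 + z * q ^ (2 * j + 1)) * (1 + z⁻¹ * q ^ (2 * j + 1))
    have shift_right := (Equiv.subRight (1 : ℤ)).hasSum_iff.mpr ih
    have shift_left := (Equiv.addRight (1 : ℤ)).hasSum_iff.mpr ih
    have hP : P * ((1 + z * x) * (1 + z⁻¹ * x)) =
        (1 + x ^ 2) * P + (x * z * P + x * z⁻¹ * P) := by field_simp; ring
    rw [prod_range_succ, hP]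
    refine ((ih.mul_left _).add
      ((shift_right.mul_left _).add (shift_left.mul_left _))).congr_fun fun n => ?_
    simp only [Nat.cast_succ, tripleProductCoeff_add_one hq hq0, Function.comp,
      Equiv.subRight_apply, Equiv.coe_addRight, zpow_sub_one₀ hz, zpow_add_one₀ hz]
    field_simp
    ring

end FiniteTripleProduct

section TripleProduct

open Finset Topology Real Complex HurwitzZeta

lemma pow_ne_one_of_norm_lt_one {𝕜 : Type*} [NormedField 𝕜] {p : 𝕜} (hp : ‖p‖ < 1) (i : ℕ) :
    p ^ (i + 1) ≠ 1 := fun h =>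
  (pow_lt_one₀ (norm_nonneg p) hp i.succ_ne_zero).ne (by rw [← norm_pow, h, norm_one])

lemma tprod_one_sub_pow_ne_zero {p : ℂ} (hp : ‖p‖ < 1) : ∏' i : ℕ, (1 - p ^ (i + 1)) ≠ 0 := by
  simp only [sub_eq_add_neg]
  refine tprod_one_add_ne_zero_of_summable
    (fun i => ?_) ?_
  · simpa [← sub_eq_add_neg, sub_eq_zero] using (pow_ne_one_of_norm_lt_one hp i).symm
  · simpa using (summable_nat_add_iff 1).mpr (summable_geometric_of_lt_one (norm_nonneg p) hp)

lemma tendsto_invQPochhammer_atTop {p : ℂ} (hp : ‖p‖ < 1) :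
    Tendsto (invQPochhammer p) atTop (𝓝 (∏' i : ℕ, (1 - p ^ (i + 1)))⁻¹) := by
  rw [← Nat.map_cast_int_atTop, tendsto_map'_iff]
  exact (ModularForm.multipliable_one_sub_pow hp).tendsto_prod_tprod_nat.inv₀
    (tprod_one_sub_pow_ne_zero hp)

lemma exists_norm_invQPochhammer_le {p : ℂ} (hp : ‖p‖ < 1) :
    ∃ C, ∀ m, ‖invQPochhammer p m‖ ≤ C := by
  obtain ⟨C, hC⟩ := ((tendsto_invQPochhammer_atTop hp).comp
    tendsto_natCast_atTop_atTop).norm.bddAbove_range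
  refine ⟨C, fun m => ?_⟩
  cases m with
  | ofNat m => exact hC ⟨m, rfl⟩
  | negSucc m => simpa [invQPochhammer] using (norm_nonneg _).trans (hC ⟨0, rfl⟩)

lemma norm_sq_lt_one {𝕜 : Type*} [NormedField 𝕜] {q : 𝕜} (hq : ‖q‖ < 1) : ‖q ^ 2‖ < 1 := by
  rw [norm_pow]
  exact pow_lt_one₀ (norm_nonneg q) hq two_ne_zero

variable {q : ℂ}

lemma tendsto_tripleProductCoeff (hq : ‖q‖ < 1) (n : ℤ) :
    Tendsto (fun N : ℕ => tripleProductCoeff q N n) atTop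
      (𝓝 ((∏' i : ℕ, (1 - (q ^ 2) ^ (i + 1)))⁻¹ * q ^ n ^ 2)) := by
  have hp := norm_sq_lt_one hq
  have hw := tendsto_invQPochhammer_atTop hp
  have hN : Tendsto (fun N : ℕ => (N : ℤ)) atTop atTop := tendsto_natCast_atTop_atTop
  have hsub := hw.comp (tendsto_atTop_add_const_right atTop (-n) hN)
  have hadd := hw.comp (tendsto_atTop_add_const_right atTop n hN)
  have hdbl := hw.comp (hN.const_mul_atTop' (r := (2 : ℤ)) two_pos)
  have hL := inv_ne_zero (tprod_one_sub_pow_ne_zero hp)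
  have := ((hsub.mul hadd).div hdbl hL).mul_const (q ^ n ^ 2)
  rwa [mul_div_cancel_right₀ _ hL] at this

lemma exists_norm_tripleProductCoeff_le (hq : ‖q‖ < 1) :
    ∃ C, ∀ (N : ℕ) (n : ℤ), ‖tripleProductCoeff q N n‖ ≤ C * ‖q ^ n ^ 2‖ := by
  have hp := norm_sq_lt_one hq
  obtain ⟨C, hC⟩ := exists_norm_invQPochhammer_le hp
  have hprod := (ModularForm.multipliable_one_sub_pow hp).tendsto_prod_tprod_nat
  obtain ⟨D, hD⟩ := hprod.norm.bddAbove_range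
  refine ⟨C * C * D, fun N n => ?_⟩
  have hC0 : 0 ≤ C := (norm_nonneg _).trans (hC 0)
  have h2N : ‖(invQPochhammer (q ^ 2) (2 * N))⁻¹‖ ≤ D := by
    rw [show (2 * N : ℤ) = (2 * N : ℕ) by push_cast; rfl, invQPochhammer_natCast, inv_inv]
    exact hD ⟨2 * N, rfl⟩
  rw [tripleProductCoeff, div_eq_mul_inv, norm_mul, norm_mul, norm_mul]
  gcongr
  exacts [hC _, hC _]

lemma tendsto_prod_jacobiTheta₂ {τ : ℂ} (hτ : 0 < τ.im) (z : ℂ) :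
    Tendsto (fun N : ℕ => ∏ j ∈ range N, (1 - cexp (π * I * τ) ^ (2 * (j + 1))) *
        ((1 + cexp (2 * π * I * z) * cexp (π * I * τ) ^ (2 * j + 1)) *
          (1 + (cexp (2 * π * I * z))⁻¹ * cexp (π * I * τ) ^ (2 * j + 1))))
      atTop (𝓝 (jacobiTheta₂ z τ)) := by
  set q := cexp (π * I * τ)
  set u := cexp (2 * π * I * z)
  have hq : ‖q‖ < 1 := by
    rw [norm_exp, exp_lt_one_iff]
    simpa using mul_pos pi_pos hτ
  have term_eq (n : ℤ) : jacobiTheta₂_term n z τ = q ^ n ^ 2 * u ^ n := by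
    rw [jacobiTheta₂_term, ← exp_int_mul, ← exp_int_mul, ← Complex.exp_add]
    congr 1
    push_cast
    ring
  have hθ : HasSum (fun n : ℤ => q ^ n ^ 2 * u ^ n) (jacobiTheta₂ z τ) :=
    (hasSum_jacobiTheta₂_term z hτ).congr_fun fun n => (term_eq n).symm
  set L := ∏' i : ℕ, (1 - (q ^ 2) ^ (i + 1))
  have hL : Tendsto (fun N => ∏ j ∈ range N, (1 - q ^ (2 * (j + 1)))) atTop (𝓝 L) := by
    simpa only [pow_mul] using
      (ModularForm.multipliable_one_sub_pow (norm_sq_lt_one hq)).tendsto_prod_tprod_nat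
  obtain ⟨C, hC⟩ := exists_norm_tripleProductCoeff_le hq
  have hsum : Tendsto (fun N : ℕ => ∑' n : ℤ, tripleProductCoeff q N n * u ^ n) atTop
      (𝓝 (∑' n : ℤ, L⁻¹ * q ^ n ^ 2 * u ^ n)) := by
    refine tendsto_tsum_of_dominated_convergence (hθ.summable.norm.mul_left C)
      (fun n => (tendsto_tripleProductCoeff hq n).mul_const _) (.of_forall fun N n => ?_)
    rw [norm_mul, norm_mul, ← mul_assoc]
    gcongr
    exact hC N n
  have hu : u ≠ 0 := Complex.exp_ne_zero _
  have hq0 : q ≠ 0 := Complex.exp_ne_zero _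
  simp only [mul_assoc L⁻¹, tsum_mul_left, hθ.tsum_eq,
    (hasSum_tripleProductCoeff_mul_zpow (pow_ne_one_of_norm_lt_one (norm_sq_lt_one hq)) hq0 hu
      _).tsum_eq] at hsum
  have hL0 : L ≠ 0 := tprod_one_sub_pow_ne_zero (norm_sq_lt_one hq)
  simpa only [prod_mul_distrib, mul_inv_cancel_left₀ hL0] using hL.mul hsum

lemma tendsto_prod_cosKernel {t : ℝ} (ht : 0 < t) (a : ℝ) :
    Tendsto (fun N : ℕ => ∏ j ∈ range N, (1 - rexp (-π * t) ^ (2 * (j + 1))) *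
        (1 + 2 * Real.cos (2 * π * a) * rexp (-π * t) ^ (2 * j + 1) +
          (rexp (-π * t) ^ (2 * j + 1)) ^ 2))
      atTop (𝓝 (cosKernel a t)) := by
  have hτ : 0 < (I * t : ℂ).im := by simpa using ht
  have h := tendsto_prod_jacobiTheta₂ hτ a
  rw [← cosKernel_def] at h
  have hq : cexp (π * I * (I * t)) = (rexp (-π * t) : ℝ) := by
    push_cast
    congr 1
    linear_combination (π * t : ℂ) * I_sq
  have hu : cexp (2 * π * I * a) + (cexp (2 * π * I * a))⁻¹ = (2 * Real.cos (2 * π * a) : ℝ) := by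
    rw [← Complex.exp_neg]
    push_cast
    rw [Complex.two_cos, neg_mul, mul_right_comm (2 * π : ℂ) I a]
  rw [hq] at h
  rw [← tendsto_ofReal_iff]
  refine h.congr fun N => ?_
  push_cast
  refine prod_congr rfl fun j _ => ?_
  congr 1
  have := mul_inv_cancel₀ (Complex.exp_ne_zero (2 * π * I * a))
  push_cast at hu
  linear_combination (cexp (-π * t) ^ (2 * j + 1)) * hu + (cexp (-π * t) ^ (2 * j + 1)) ^ 2 * this

lemma one_add_two_cos_mul_add_sq_pos (θ : ℝ) {x : ℝ} (hx0 : 0 ≤ x) (hx : x < 1) :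
    0 < 1 + 2 * Real.cos θ * x + x ^ 2 := by
  nlinarith [Real.neg_one_le_cos θ]

lemma exp_neg_pi_mul_lt_one {t : ℝ} (ht : 0 < t) : rexp (-π * t) < 1 := by
  simpa using mul_pos pi_pos ht

lemma cosKernel_le_cosKernel {a b t : ℝ} (ht : 0 < t)
    (hab : Real.cos (2 * π * a) ≤ Real.cos (2 * π * b)) : cosKernel a t ≤ cosKernel b t := by
  have hq := exp_neg_pi_mul_lt_one ht
  refine le_of_tendsto_of_tendsto' (tendsto_prod_cosKernel ht a) (tendsto_prod_cosKernel ht b)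
    fun N => prod_le_prod (fun j _ => ?_) fun j _ => ?_
  · have := pow_lt_one₀ (exp_pos _).le hq (2 * j).succ_ne_zero
    have := pow_le_one₀ (exp_pos _).le hq.le (n := 2 * (j + 1))
    exact mul_nonneg (sub_nonneg.mpr this) (one_add_two_cos_mul_add_sq_pos _ (by positivity) ‹_›).le
  · have := pow_le_one₀ (exp_pos _).le hq.le (n := 2 * (j + 1))
    have := sub_nonneg.mpr this
    gcongr

end TripleProduct

section RowSums

open Finset Topology Real HurwitzZeta

lemma evenKernel_pos (a : ℝ) {x : ℝ} (hx : 0 < x) : 0 < evenKernel a x := by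
  have h := hasSum_int_evenKernel a hx
  rw [← h.tsum_eq]
  exact h.summable.tsum_pos (fun _ => (exp_pos _).le) 0 (exp_pos _)

lemma cosKernel_pos (a : ℝ) {t : ℝ} (ht : 0 < t) : 0 < cosKernel a t := by
  have h := evenKernel_pos a (one_div_pos.mpr ht)
  rw [evenKernel_functional_equation, one_div_one_div] at h
  exact pos_of_mul_pos_right h (by positivity)

lemma evenKernel_div_evenKernel (a b : UnitAddCircle) {x : ℝ} (hx : 0 < x) :
    evenKernel a x / evenKernel b x = cosKernel a (1 / x) / cosKernel b (1 / x) := by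
  rw [evenKernel_functional_equation, evenKernel_functional_equation,
    mul_div_mul_left _ _ (by positivity)]

lemma evenKernel_le_evenKernel {a b x : ℝ} (hx : 0 < x)
    (hab : Real.cos (2 * π * a) ≤ Real.cos (2 * π * b)) : evenKernel a x ≤ evenKernel b x := by
  rw [evenKernel_functional_equation, evenKernel_functional_equation]
  gcongr
  exact cosKernel_le_cosKernel (one_div_pos.mpr hx) hab

lemma tendsto_sum_log_div_cosKernel {t : ℝ} (ht : 0 < t) (a b : ℝ) :
    Tendsto (fun N : ℕ => ∑ j ∈ range N, Real.log
        ((1 + 2 * Real.cos (2 * π * a) * rexp (-π * t) ^ (2 * j + 1) +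
            (rexp (-π * t) ^ (2 * j + 1)) ^ 2) /
          (1 + 2 * Real.cos (2 * π * b) * rexp (-π * t) ^ (2 * j + 1) +
            (rexp (-π * t) ^ (2 * j + 1)) ^ 2)))
      atTop (𝓝 (Real.log (cosKernel a t / cosKernel b t))) := by
  have hb := (cosKernel_pos b ht).ne'
  have hab : cosKernel a t / cosKernel b t ≠ 0 := div_ne_zero (cosKernel_pos a ht).ne' hb
  refine (((tendsto_prod_cosKernel ht a).div (tendsto_prod_cosKernel ht b) hb).log hab).congr
    fun N => ?_
  have hq (j : ℕ) : rexp (-π * t) ^ (j + 1) < 1 :=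
    pow_lt_one₀ (exp_pos _).le (exp_neg_pi_mul_lt_one ht) j.succ_ne_zero
  have one_sub_ne_zero (j : ℕ) : 1 - rexp (-π * t) ^ (2 * (j + 1)) ≠ 0 :=
    sub_ne_zero.mpr (hq (2 * j + 1)).ne'
  have factor_pos (c : ℝ) (j : ℕ) :=
    one_add_two_cos_mul_add_sq_pos (2 * π * c) (by positivity) (hq (2 * j))
  rw [Pi.div_apply, ← prod_div_distrib, Real.log_prod]
  · refine sum_congr rfl fun j _ => ?_
    rw [mul_div_mul_left _ _ (one_sub_ne_zero j)]
  · exact fun j _ => div_ne_zero (mul_ne_zero (one_sub_ne_zero j) (factor_pos a j).ne')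
      (mul_ne_zero (one_sub_ne_zero j) (factor_pos b j).ne')

lemma summable_neg_one_zpow_mul_pow_natAbs_div {q : ℝ} (hq0 : 0 ≤ q) (hq1 : q < 1) :
    Summable fun p : ℤ × ℕ =>
      (-1) ^ p.1 * (q ^ (2 * p.2 + 1)) ^ (4 * p.1 + 1).natAbs / (4 * p.1 + 1).natAbs := by
  have hnat : Summable fun j : ℕ => q ^ j := summable_geometric_of_lt_one hq0 hq1
  have hint : Summable fun n : ℤ => q ^ n.natAbs :=
    .of_nat_of_neg (by simpa using hnat) (by simpa using hnat)
  refine .of_norm_bounded (hint.mul_of_nonneg hnat (fun n => by positivity)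
    fun j => by positivity) fun ⟨n, j⟩ => ?_
  have hk : n.natAbs + 1 ≤ (4 * n + 1).natAbs := by lia
  have hk1 : (1 : ℝ) ≤ (4 * n + 1).natAbs := by exact_mod_cast le_of_add_le_right hk
  calc ‖(-1) ^ n * (q ^ (2 * j + 1)) ^ (4 * n + 1).natAbs / (4 * n + 1).natAbs‖
      = (q ^ (2 * j + 1)) ^ (4 * n + 1).natAbs / (4 * n + 1).natAbs := by
        simp [abs_of_nonneg hq0]
    _ ≤ (q ^ (2 * j + 1)) ^ (4 * n + 1).natAbs := div_le_self (by positivity) hk1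
    _ ≤ q ^ (n.natAbs + j) := by
        rw [← pow_mul]
        exact pow_le_pow_of_le_one hq0 hq1.le (by nlinarith [Nat.zero_le (j * n.natAbs)])
    _ = q ^ n.natAbs * q ^ j := pow_add ..

lemma hasSum_exp_pow_odd_pow_div {t : ℝ} (ht : 0 < t) {k : ℕ} (hk : k ≠ 0) :
    HasSum (fun j : ℕ => (rexp (-π * t) ^ (2 * j + 1)) ^ k / k)
      (1 / (2 * (k * Real.sinh (π * t * k)))) := by
  have hy : 0 < π * t * k := by positivity
  rw [mul_left_comm, mul_comm (k : ℝ), ← div_div]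
  refine ((hasSum_exp_neg_odd_mul hy).div_const (k : ℝ)).congr_fun fun j => ?_
  rw [← Real.exp_nat_mul, ← Real.exp_nat_mul]
  push_cast
  ring_nf

lemma hasSum_int_neg_one_zpow_div_mul_sinh {t : ℝ} (ht : 0 < t) :
    HasSum (fun n : ℤ => (-1) ^ n /
        ((4 * n + 1).natAbs * Real.sinh (π * t * (4 * n + 1).natAbs)))
      (1 / √2 * Real.log (cosKernel (1 / 8 : ℝ) t / cosKernel (3 / 8 : ℝ) t)) := by
  set q := rexp (-π * t)
  have hq0 : 0 < q := exp_pos _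
  have hq1 : q < 1 := exp_neg_pi_mul_lt_one ht
  obtain ⟨S, hS⟩ := summable_neg_one_zpow_mul_pow_natAbs_div hq0.le hq1
  have sum_over_j := hS.prod_fiberwise fun n => by
    simpa only [mul_div_assoc] using
      (hasSum_exp_pow_odd_pow_div ht (k := (4 * n + 1).natAbs) (by lia)).mul_left ((-1) ^ n)
  have sum_over_n := ((Equiv.prodComm ℕ ℤ).hasSum_iff.mpr hS).prod_fiberwise fun j =>
    hasSum_int_neg_one_zpow_mul_pow_natAbs_div (x := q ^ (2 * j + 1))
      (by simpa [abs_of_pos hq0] using pow_lt_one₀ hq0.le hq1 (2 * j).succ_ne_zero)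
  have value_eq : S =
      1 / (2 * √2) * Real.log (cosKernel (1 / 8 : ℝ) t / cosKernel (3 / 8 : ℝ) t) := by
    have hcos₁ : Real.cos (2 * π * (1 / 8)) = √2 / 2 := by
      rw [← Real.cos_pi_div_four]
      ring_nf
    have hcos₃ : Real.cos (2 * π * (3 / 8)) = -(√2 / 2) := by
      rw [← Real.cos_pi_div_four, ← Real.cos_pi_sub]
      ring_nf
    have h := (tendsto_sum_log_div_cosKernel ht (1 / 8) (3 / 8)).const_mul (1 / (2 * √2))
    refine tendsto_nhds_unique sum_over_n.tendsto_sum_nat (h.congr fun N => ?_)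
    rw [hcos₁, hcos₃, mul_sum]
    simp only [mul_neg, neg_mul, mul_div_cancel₀ _ (two_ne_zero' ℝ), ← sub_eq_add_neg, q]
  rw [show 1 / √2 * Real.log (cosKernel (1 / 8 : ℝ) t / cosKernel (3 / 8 : ℝ) t) = 2 * S by
    rw [value_eq]
    field_simp]
  refine (sum_over_j.mul_left 2).congr_fun fun n => ?_
  field_simp

lemma hasSum_tsum_neg_one_zpow_div_sq_add_sq {c : ℝ} (hc : 0 < c) :
    HasSum (fun n : ℤ => ∑' m : ℤ, (-1 : ℝ) ^ (m + n) / ((c * m) ^ 2 + (4 * n + 1) ^ 2))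
      (π / (c * √2) *
        Real.log (evenKernel (1 / 8 : ℝ) c / evenKernel (3 / 8 : ℝ) c)) := by
  rw [evenKernel_div_evenKernel _ _ hc, ← div_div, div_eq_mul_one_div (π / c), mul_assoc]
  refine ((hasSum_int_neg_one_zpow_div_mul_sinh (one_div_pos.mpr hc)).mul_left (π / c)).congr_fun
    fun n => ?_
  have hn : (4 * n + 1 : ℝ) ≠ 0 := by exact_mod_cast (by lia : 4 * n + 1 ≠ 0)
  have hnatAbs : ((4 * n + 1).natAbs : ℝ) = |4 * (n : ℝ) + 1| := by
    rw [Nat.cast_natAbs]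
    push_cast
    rfl
  have hterm (m : ℤ) : (-1 : ℝ) ^ (m + n) / ((c * m) ^ 2 + (4 * n + 1) ^ 2) =
      (-1) ^ n * ((-1) ^ m / ((c * m) ^ 2 + (4 * n + 1) ^ 2)) := by
    rw [zpow_add₀ (by norm_num), mul_comm, mul_div_assoc]
  rw [tsum_congr hterm, tsum_mul_left, tsum_int_neg_one_zpow_div_sq_add_sq hn hc, hnatAbs]
  ring_nf

end RowSums

section ThetaConstants

open Real HurwitzZeta

lemma evenKernel_one_sub (a x : ℝ) : evenKernel (1 - a : ℝ) x = evenKernel a x := by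
  rw [← evenKernel_neg a x, sub_eq_neg_add, QuotientAddGroup.mk_add, AddCircle.coe_period,
    add_zero, QuotientAddGroup.mk_neg]

/-- The theta series `∑ₙ εⁿ exp (-π (n + a)² x)` twisted by a sign `ε = ±1`, encoded as a unit of
`ℤ`. Multiplying two of them, or splitting one by parity, yields untwisted series in which `ε` is
only a coefficient, so both signs can be treated at once. -/
noncomputable def signedKernel (ε : ℤˣ) (a x : ℝ) : ℝ :=
  ∑' n : ℤ, (ε ^ n : ℤˣ) * rexp (-π * (n + a) ^ 2 * x)

lemma units_zpow_two_mul (ε : ℤˣ) (n : ℤ) : ε ^ (2 * n) = 1 := by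
  rw [zpow_mul, zpow_ofNat, Int.units_sq, one_zpow]

lemma units_zpow_two_mul_add_one (ε : ℤˣ) (n : ℤ) : ε ^ (2 * n + 1) = ε := by
  rw [zpow_add_one, units_zpow_two_mul, one_mul]

variable {x : ℝ}

lemma hasSum_signedKernel (ε : ℤˣ) (a : ℝ) (hx : 0 < x) :
    HasSum (fun n : ℤ => ((ε ^ n : ℤˣ) : ℝ) * rexp (-π * (n + a) ^ 2 * x))
      (signedKernel ε a x) := by
  refine (Summable.of_norm_bounded (hasSum_int_evenKernel a hx).summable fun n => ?_).hasSum
  obtain h | h := Int.units_eq_one_or (ε ^ n) <;> simp [h]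

lemma signedKernel_one (a : ℝ) (hx : 0 < x) : signedKernel 1 a x = evenKernel a x := by
  simpa [signedKernel] using (hasSum_int_evenKernel a hx).tsum_eq

lemma signedKernel_neg_one_zero (hx : 0 < x) :
    signedKernel (-1) 0 x = cosKernel (1 / 2 : ℝ) x := by
  refine (hasSum_signedKernel (-1) 0 hx).unique (Complex.hasSum_ofReal.mp ?_)
  refine (hasSum_int_cosKernel (1 / 2) hx).congr_fun fun n => ?_
  have hexp : Complex.exp (2 * π * Complex.I * (1 / 2 : ℝ) * n) = (-1) ^ n := by
    rw [← Complex.exp_pi_mul_I, ← Complex.exp_int_mul]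
    push_cast
    ring_nf
  rw [hexp]
  obtain hn | hn := n.even_or_odd <;> simp [hn.neg_one_zpow]

lemma signedKernel_neg_one_zero_one : signedKernel (-1) 0 1 = evenKernel (1 / 2 : ℝ) 1 := by
  rw [signedKernel_neg_one_zero one_pos, evenKernel_functional_equation]
  simp

lemma signedKernel_eq_add (ε : ℤˣ) (a : ℝ) (hx : 0 < x) :
    signedKernel ε a x =
      evenKernel (a / 2 : ℝ) (4 * x) + ε * evenKernel ((a + 1) / 2 : ℝ) (4 * x) := by
  have hx4 : 0 < 4 * x := by positivity
  refine (hasSum_signedKernel ε a hx).unique (hasSum_int_of_even_of_odd ?_ ?_)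
  · refine (hasSum_int_evenKernel (a / 2) hx4).congr_fun fun n => ?_
    rw [units_zpow_two_mul]
    push_cast
    ring_nf
  · refine ((hasSum_int_evenKernel ((a + 1) / 2) hx4).mul_left _).congr_fun fun n => ?_
    rw [units_zpow_two_mul_add_one]
    push_cast
    ring_nf

lemma hasSum_signedKernel_mul_signedKernel (ε : ℤˣ) (a b : ℝ) (hx : 0 < x) :
    HasSum (fun p : ℤ × ℤ =>
        ((ε ^ (p.1 + p.2) : ℤˣ) : ℝ) * rexp (-π * ((p.1 + a) ^ 2 + (p.2 + b) ^ 2) * x))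
      (signedKernel ε a x * signedKernel ε b x) := by
  have ha := hasSum_signedKernel ε a hx
  have hb := hasSum_signedKernel ε b hx
  refine (ha.mul hb (summable_mul_of_summable_norm ha.summable.norm hb.summable.norm)).congr_fun
    fun p => ?_
  rw [mul_mul_mul_comm, ← Real.exp_add, zpow_add]
  push_cast
  ring_nf

lemma signedKernel_mul_signedKernel (ε : ℤˣ) (a b : ℝ) (hx : 0 < x) :
    signedKernel ε a x * signedKernel ε b x =
      evenKernel ((a + b) / 2 : ℝ) (2 * x) * evenKernel ((a - b) / 2 : ℝ) (2 * x) +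
      ε * (evenKernel ((a + b + 1) / 2 : ℝ) (2 * x) *
        evenKernel ((a - b + 1) / 2 : ℝ) (2 * x)) := by
  have hx2 : 0 < 2 * x := by positivity
  have hasSum_mul (c d : ℝ) : HasSum (fun p : ℤ × ℤ =>
      rexp (-π * ((p.1 + c) ^ 2 + (p.2 + d) ^ 2) * (2 * x)))
      (evenKernel c (2 * x) * evenKernel d (2 * x)) := by
    simpa [signedKernel_one _ hx2] using hasSum_signedKernel_mul_signedKernel 1 c d hx2
  refine (hasSum_signedKernel_mul_signedKernel ε a b hx).unique
    (hasSum_int_prod_of_even_of_odd ?_ ?_)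
  · refine (hasSum_mul ((a + b) / 2) ((a - b) / 2)).congr_fun fun ⟨m, n⟩ => ?_
    rw [add_add_sub_cancel, ← two_mul, units_zpow_two_mul]
    push_cast
    ring_nf
  · refine ((hasSum_mul ((a + b + 1) / 2) ((a - b + 1) / 2)).mul_left _).congr_fun fun ⟨m, n⟩ => ?_
    rw [add_right_comm, add_add_sub_cancel, ← two_mul, units_zpow_two_mul_add_one]
    push_cast
    ring_nf

/-- The relation holds because `x = 1` is the fixed point of the functional equation, where the
alternating theta constant agrees with the one shifted by `1 / 2`. -/
lemma evenKernel_zero_one_pow_four :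
    evenKernel 0 1 ^ 4 = 2 * evenKernel (1 / 2 : ℝ) 1 ^ 4 := by
  set X := evenKernel 0 2
  set Y := evenKernel (1 / 2 : ℝ) 2
  have hzero : evenKernel 0 1 ^ 2 = X ^ 2 + Y ^ 2 := by
    have := signedKernel_mul_signedKernel 1 0 0 one_pos
    norm_num [signedKernel_one] at this
    linear_combination this
  have hhalf_sub : evenKernel (1 / 2 : ℝ) 1 ^ 2 = X ^ 2 - Y ^ 2 := by
    have := signedKernel_mul_signedKernel (-1) 0 0 one_pos
    norm_num [signedKernel_neg_one_zero_one] at this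
    linear_combination this
  have hhalf_mul : evenKernel (1 / 2 : ℝ) 1 ^ 2 = 2 * (X * Y) := by
    have := signedKernel_mul_signedKernel 1 (1 / 2) (1 / 2) one_pos
    norm_num [signedKernel_one, AddCircle.coe_period] at this
    linear_combination this
  linear_combination (evenKernel 0 1 ^ 2 + X ^ 2 + Y ^ 2) * hzero -
    (evenKernel (1 / 2 : ℝ) 1 ^ 2 + X ^ 2 - Y ^ 2) * hhalf_sub -
    (evenKernel (1 / 2 : ℝ) 1 ^ 2 + 2 * (X * Y)) * hhalf_mul

lemma signedKernel_quarter_two_sq (ε : ℤˣ) :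
    signedKernel ε (1 / 4) 2 ^ 2 = evenKernel (1 / 4 : ℝ) 4 * signedKernel ε 0 1 := by
  have hmul := signedKernel_mul_signedKernel ε (1 / 4) (1 / 4) two_pos
  have hsplit := signedKernel_eq_add ε 0 one_pos
  have hquarter := evenKernel_one_sub (1 / 4) 4
  norm_num at hmul hsplit hquarter ⊢
  rw [sq, hmul, hsplit, hquarter]
  ring

lemma evenKernel_add_pow_eight :
    (evenKernel (1 / 8 : ℝ) 8 + evenKernel (3 / 8 : ℝ) 8) ^ 8 =
      2 * (evenKernel (1 / 8 : ℝ) 8 - evenKernel (3 / 8 : ℝ) 8) ^ 8 := by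
  have hfive := evenKernel_one_sub (3 / 8) 8
  have hsplit (ε : ℤˣ) : signedKernel ε (1 / 4) 2 =
      evenKernel (1 / 8 : ℝ) 8 + ε * evenKernel (3 / 8 : ℝ) 8 := by
    have := signedKernel_eq_add ε (1 / 4) two_pos
    norm_num at this hfive ⊢
    rw [this, hfive]
  have hadd : signedKernel 1 (1 / 4) 2 = evenKernel (1 / 8 : ℝ) 8 + evenKernel (3 / 8 : ℝ) 8 := by
    simpa using hsplit 1
  have hsub :
      signedKernel (-1) (1 / 4) 2 = evenKernel (1 / 8 : ℝ) 8 - evenKernel (3 / 8 : ℝ) 8 := by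
    simpa [sub_eq_add_neg] using hsplit (-1)
  calc (evenKernel (1 / 8 : ℝ) 8 + evenKernel (3 / 8 : ℝ) 8) ^ 8
      = (signedKernel 1 (1 / 4) 2 ^ 2) ^ 4 := by rw [hadd, ← pow_mul]
    _ = evenKernel (1 / 4 : ℝ) 4 ^ 4 * (2 * evenKernel (1 / 2 : ℝ) 1 ^ 4) := by
        rw [signedKernel_quarter_two_sq, signedKernel_one _ one_pos, mul_pow,
          QuotientAddGroup.mk_zero, evenKernel_zero_one_pow_four]
    _ = 2 * (signedKernel (-1) (1 / 4) 2 ^ 2) ^ 4 := by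
        rw [signedKernel_quarter_two_sq, signedKernel_neg_one_zero_one, mul_pow, mul_left_comm]
    _ = 2 * (evenKernel (1 / 8 : ℝ) 8 - evenKernel (3 / 8 : ℝ) 8) ^ 8 := by rw [hsub, ← pow_mul]

lemma evenKernel_div_evenKernel_eight :
    evenKernel (1 / 8 : ℝ) 8 / evenKernel (3 / 8 : ℝ) 8 =
      ((2 : ℝ) ^ ((1 : ℝ) / 8) + 1) / ((2 : ℝ) ^ ((1 : ℝ) / 8) - 1) := by
  set E := evenKernel (1 / 8 : ℝ) 8
  set O := evenKernel (3 / 8 : ℝ) 8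
  set r : ℝ := 2 ^ ((1 : ℝ) / 8)
  have hE : 0 < E := evenKernel_pos _ (by norm_num)
  have hO : 0 < O := evenKernel_pos _ (by norm_num)
  have hr : 1 < r := Real.one_lt_rpow one_lt_two (by norm_num)
  have hr8 : r ^ 8 = 2 := by
    rw [← Real.rpow_natCast, ← Real.rpow_mul zero_le_two]
    norm_num
  have hOE : O ≤ E := by
    refine evenKernel_le_evenKernel (by norm_num) (Real.cos_le_cos_of_nonneg_of_le_pi ?_ ?_ ?_) <;>
      linarith [pi_pos]
  have hadd : E + O = r * (E - O) := by
    have hpow : (E + O) ^ 8 = (r * (E - O)) ^ 8 := by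
      rw [mul_pow, hr8]
      exact evenKernel_add_pow_eight
    exact (pow_left_inj₀ (by positivity) (mul_nonneg (by positivity) (sub_nonneg.mpr hOE))
      (by norm_num)).mp hpow
  rw [div_eq_div_iff hO.ne' (sub_ne_zero.mpr hr.ne')]
  linear_combination -hadd

end ThetaConstants

lemma tendsto_Ioo_neg_atTop :
    Tendsto (fun N : ℕ => Finset.Ioo (-(N : ℤ)) N) atTop atTop := by
  refine tendsto_atTop_finset_of_monotone (fun M N h => ?_) fun n => ⟨n.natAbs + 1, ?_⟩
  · exact Finset.Ioo_subset_Ioo (by simpa using h) (by simpa using h)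
  · rw [Finset.mem_Ioo]
    lia

/-- `∑∑ (-1)^{m+n}/((8m)² + (4n+1)²) = (π/(8√2)) log((2^{1/8} + 1)/(2^{1/8} - 1))`. -/
theorem F41_at_eight :
    Tendsto (fun N : ℕ => ∑ n ∈ Finset.Ioo (-(N : ℤ)) (N : ℤ),
        ∑' m : ℤ, (-1 : ℝ) ^ (m + n) / ((8 * (m : ℝ)) ^ 2 + (4 * (n : ℝ) + 1) ^ 2))
      atTop
      (nhds (Real.pi / (8 * Real.sqrt 2) *
        Real.log (((2 : ℝ) ^ ((1 : ℝ) / 8) + 1) / ((2 : ℝ) ^ ((1 : ℝ) / 8) - 1)))) := by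
  rw [← evenKernel_div_evenKernel_eight]
  have hasSum_rows := hasSum_tsum_neg_one_zpow_div_sq_add_sq (c := 8) (by norm_num)
  exact hasSum_rows.comp tendsto_Ioo_neg_atTop
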